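/- For every g ≥ 2, not every finite group is involved in the integral symplectic group Sp(2g,ℤ): there exists a finite group H such that no finite-index subgroup of Sp(2g,ℤ) admits a surjective homomorphism onto H. -/

import Mathlib

/-- A bundled finite group. -/
structure BundledFiniteGroup : Type 1 where
  carrier : Type
  [group : Group carrier]
  [finite : Finite carrier]

attribute [instance] BundledFiniteGroup.group BundledFiniteGroup.finite

set_option linter.all false

namespace SpInv

lemma exists_coprime_shift (x a Y : ℤ) (h : IsCoprime x a) (hY : Y ≠ 0) :
    ∃ k : ℤ, IsCoprime (x + a * k) Y := by
  classical
  -- work with product of primes of Y not dividing x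
  let s : Finset ℕ := Y.natAbs.primeFactors.filter (fun p : ℕ => ¬ (p : ℤ) ∣ x)
  refine ⟨∏ p ∈ s, (p : ℤ), ?_⟩
  rw [Int.isCoprime_iff_gcd_eq_one, Int.gcd_def]
  refine Nat.Coprime.gcd_eq_one ?_
  refine Nat.coprime_of_dvd ?_
  intro p hp h1 h2
  have h1' : (p : ℤ) ∣ x + a * ∏ p ∈ s, (p : ℤ) := Int.natCast_dvd.mpr h1
  have hpp : Prime (p : ℤ) := Nat.prime_iff_prime_int.mp hp
  by_cases hx : (p : ℤ) ∣ x
  · have h3 : (p : ℤ) ∣ a * ∏ p ∈ s, (p : ℤ) := (dvd_add_right hx).mp h1'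
    rcases hpp.dvd_or_dvd h3 with h4 | h4
    · exact hpp.not_isUnit (h.isUnit_of_dvd' hx h4)
    · obtain ⟨r, hr, hpr⟩ := (hpp.dvd_finsetProd_iff _).mp h4
      have hr' := Finset.mem_filter.mp hr
      have hrp := Nat.prime_of_mem_primeFactors hr'.1
      have : p = r := (Nat.prime_dvd_prime_iff_eq hp hrp).mp (by exact_mod_cast hpr)
      subst this
      exact hr'.2 hx
  · have hs : p ∈ s := Finset.mem_filter.mpr
      ⟨Nat.mem_primeFactors.mpr ⟨hp, h2, by simpa using hY⟩, hx⟩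
    have h3 : (p : ℤ) ∣ a * ∏ p ∈ s, (p : ℤ) :=
      Dvd.dvd.mul_left (Finset.dvd_prod_of_mem (fun p : ℕ => (p : ℤ)) hs) _
    exact hx ((dvd_add_left h3).mp h1')

lemma number_lemma (x y a : ℤ) (ha : a ≠ 0) :
    ∃ k l P Q : ℤ, P * (x + a * k) + Q * (y + a * l) = a := by
  obtain ⟨l, hl⟩ : ∃ l : ℤ, y + a * l ≠ 0 := by
    by_cases hy : y = 0
    · exact ⟨1, by simpa [hy] using ha⟩
    · exact ⟨0, by simpa using hy⟩
  obtain ⟨d, x', a', hd, hx, ha'⟩ := Int.exists_gcd_one (m := x) (n := a)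
    (Int.gcd_pos_of_ne_zero_right _ ha) |>.elim fun x' h => h.elim fun a' h =>
      (⟨(Int.gcd x a : ℤ), x', a', h.1, h.2.1, h.2.2⟩ :
        ∃ d x' a' : ℤ, Int.gcd x' a' = 1 ∧ x = x' * d ∧ a = a' * d)
  obtain ⟨k, P, Q, hk⟩ := exists_coprime_shift x' a' (y + a * l)
    (Int.isCoprime_iff_gcd_eq_one.mpr hd) hl
  refine ⟨k, l, P * a', Q * a, ?_⟩
  have : x + a * k = d * (x' + a' * k) := by rw [hx, ha']; ring
  rw [this]
  calc _ = (a' * d) * (P * (x' + a' * k)) + a * (Q * (y + a * l)) := by ring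
    _ = a * (P * (x' + a' * k) + Q * (y + a * l)) := by rw [← ha']; ring
    _ = a := by rw [hk, mul_one]

section abs
variable {M : Type*} [AddCommGroup M] (ω : M →ₗ[ℤ] M →ₗ[ℤ] ℤ)

lemma om_swap (h : ∀ x, ω x x = 0) (x y : M) : ω x y = - ω y x := by
  have := h (x + y)
  simp only [map_add, LinearMap.add_apply, h] at this
  linarith

lemma short_move (halt : ∀ x, ω x x = 0) (m : ℤ) (R : M → M → Prop) (Q : M → Prop)
    (hT : ∀ a b c, R a b → R b c → R a c)
    (hR : ∀ w v c, Q v → R w (w + (m * c * ω w v) • v))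
    (w u v : M) (c : ℤ) (huv : ω u v = 0) (hu : Q u) (hv : Q v) (huv' : Q (u + v)) :
    R w (w + (m * c * ω w u) • v + (m * c * ω w v) • u) := by
  have hvu : ω v u = 0 := by rw [om_swap ω halt, huv, neg_zero]
  have h1 := hR w (u + v) c huv'
  have h2 := hR (w + (m * c * ω w (u + v)) • (u + v)) u (-c) hu
  have h3 := hT _ _ _ h1 h2
  have h4 := hT _ _ _ h3 (hR _ v (-c) hv)
  convert h4 using 1
  simp only [map_add, map_smul, LinearMap.add_apply, LinearMap.smul_apply, halt, huv, hvu,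
    smul_eq_mul]
  module

/-- last step -/
lemma stepC (halt : ∀ x, ω x x = 0) (m : ℤ) (R : M → M → Prop)
    (hS : ∀ a b, R a b → R b a)
    (hT : ∀ a b c, R a b → R b c → R a c)
    (hR : ∀ w v c, R w (w + (m * c * ω w v) • v))
    (e f u z y0 : M) (t : ℤ) (hef : ω e f = 1) (ht : ω e u = m * t)
    (hz : ω (e + m • u) z = 1) (hy1 : ω e y0 = 0) (hy2 : ω f y0 = 0)
    (hy : ω u y0 = ω (e + m • u) f) : R (e + m • u) e := by
  have hfe : ω f e = -1 := by rw [om_swap ω halt, hef]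
  have hue : ω u e = - (m * t) := by rw [om_swap ω halt, ht]
  obtain ⟨z0, hz0⟩ : ∃ z0, z0 = z - (ω z f) • e - (ω e z) • f := ⟨_, rfl⟩
  have hze : ω e z0 = 0 := by simp [hz0, halt, hef]
  obtain ⟨k, hk⟩ : ∃ k, k = t - ω u f := ⟨_, rfl⟩
  obtain ⟨u2, hu2⟩ : ∃ u2, u2 = f + (k * ω z f * m) • e + (k * ω e z) • y0 + (k * m) • z0 :=
    ⟨_, rfl⟩
  have h1 : ω e u2 = 1 := by simp [hu2, halt, hef, hy1, hze]
  have h2 : ω u u2 = t := by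
    have hz' : ω (e + m • u) ((ω z f) • e + (ω e z) • f + z0) = 1 := by
      rw [hz0]; simpa using hz
    simp only [map_add, map_smul, LinearMap.add_apply, LinearMap.smul_apply, halt, hef, hue,
      smul_eq_mul, hze] at hz' hy
    simp only [hu2, map_add, map_smul, hue, smul_eq_mul, hy]
    linear_combination k * hz' + hk
  have h3 : R e (e + m • u2) := by simpa [h1] using hR e u2 1
  have h4 : R (e + m • u) (e + m • u2) := by
    have := hR (e + m • u) (u2 - u) 1
    have h5 : ω (e + m • u) (u2 - u) = 1 := by
      simp [halt, h1, h2, ht]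
    rw [h5] at this
    convert this using 1
    module
  exact hT _ _ _ h4 (hS _ _ h3)

lemma stepB (halt : ∀ x, ω x x = 0) (m : ℤ) (R : M → M → Prop)
    (hS : ∀ a b, R a b → R b a)
    (hT : ∀ a b c, R a b → R b c → R a c)
    (hR : ∀ w v c, R w (w + (m * c * ω w v) • v))
    (hP : ∀ a b, R a b → (∃ z, ω a z = 1) → ∃ z, ω b z = 1)
    (e f e2 f2 u : M) (t : ℤ) (hef : ω e f = 1) (hef2 : ω e2 f2 = 1)
    (h1 : ω e e2 = 0) (h2 : ω e f2 = 0) (h3 : ω f e2 = 0) (h4 : ω f f2 = 0)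
    (ht : ω e u = m * t)
    (hz : ∃ z, ω (e + m • u) z = 1) (ha : ω (e + m • u) f ≠ 0) : R (e + m • u) e := by
  obtain ⟨k, l, P, Q, hkl⟩ := number_lemma (ω u f2) (ω e2 u) _ ha
  obtain ⟨a, haa⟩ : ∃ a, a = ω (e + m • u) f := ⟨_, rfl⟩
  obtain ⟨v, hv⟩ : ∃ v, v = k • e2 + l • f2 := ⟨_, rfl⟩
  have hev : ω e v = 0 := by simp [hv, h1, h2]
  have hfv : ω f v = 0 := by simp [hv, h3, h4]
  have hvf : ω v f = 0 := by rw [om_swap ω halt, hfv, neg_zero]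
  have hR1 := short_move ω halt m R (fun _ => True) hT (fun w v c _ => hR w v c) (e + m • u) f v 1
    hfv trivial trivial trivial
  obtain ⟨u', hu'⟩ : ∃ u', u' = u + a • v + (m * ω u v) • f := ⟨_, rfl⟩
  have hw : e + m • u + (m * 1 * ω (e + m • u) f) • v + (m * 1 * ω (e + m • u) v) • f
      = e + m • u' := by
    rw [← haa, hu']
    simp only [map_add, map_smul, LinearMap.add_apply, LinearMap.smul_apply, hev, smul_eq_mul]
    module
  rw [hw] at hR1
  obtain ⟨z, hz'⟩ := hP _ _ hR1 hz
  have hf2f : ω f2 f = 0 := by rw [om_swap ω halt, h4, neg_zero]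
  have hf2e : ω f2 e2 = -1 := by rw [om_swap ω halt, hef2]
  have he2f : ω e2 f = 0 := by rw [om_swap ω halt, h3, neg_zero]
  refine hT _ _ _ hR1 (stepC ω halt m R hS hT hR e f u' z (P • f2 - Q • e2) (t + ω u v) hef ?_ hz'
    ?_ ?_ ?_)
  · simp [hu', hev, hef, ht]; ring
  · simp [h1, h2]
  · simp [h3, h4]
  · have e1 : ω (e + m • u') f = a := by
      rw [haa, hu']; simp [hvf, halt]
    have e2' : ω u' f2 = ω u f2 + a * k := by
      simp [hu', hv, hef2, halt, h4]
    have e3 : ω u' e2 = - (ω e2 u + a * l) := by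
      rw [om_swap ω halt u' e2]
      simp [hu', hv, hef2, halt, he2f]
    rw [e1, map_sub, map_smul, map_smul, e2', e3, smul_eq_mul, smul_eq_mul, haa]
    linear_combination hkl

lemma stepA (halt : ∀ x, ω x x = 0) (m : ℤ) (hm : 2 ≤ m) (R : M → M → Prop)
    (hS : ∀ a b, R a b → R b a)
    (hT : ∀ a b c, R a b → R b c → R a c)
    (hR : ∀ w v c, R w (w + (m * c * ω w v) • v))
    (hP : ∀ a b, R a b → (∃ z, ω a z = 1) → ∃ z, ω b z = 1)
    (e f e2 f2 u : M) (hef : ω e f = 1) (hef2 : ω e2 f2 = 1)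
    (h1 : ω e e2 = 0) (h2 : ω e f2 = 0) (h3 : ω f e2 = 0) (h4 : ω f f2 = 0)
    (hz : ∃ z, ω (e + m • u) z = 1) : R (e + m • u) e := by
  have ha : ω (e + m • u) f = 1 + m * ω u f := by simp [hef]
  obtain ⟨u1, hu1⟩ : ∃ u1, u1 = u - (ω e u * (1 + m * ω u f)) • f := ⟨_, rfl⟩
  have hR1 := hR (e + m • u) f (- ω e u)
  have hw : e + m • u + (m * (- ω e u) * ω (e + m • u) f) • f = e + m • u1 := by
    rw [ha, hu1]; module
  rw [hw] at hR1
  refine hT _ _ _ hR1 (stepB ω halt m R hS hT hR hP e f e2 f2 u1 (- (ω e u * ω u f)) hef hef2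
    h1 h2 h3 h4 ?_ (hP _ _ hR1 hz) ?_)
  · simp [hu1, hef]; ring
  · have : ω (e + m • u1) f = 1 + m * ω u f := by simp [hu1, hef, halt]
    rw [this]
    intro h
    have h5 : m ∣ 1 := ⟨- ω u f, by linarith⟩
    have := Int.le_of_dvd one_pos h5
    omega

lemma stepF (halt : ∀ x, ω x x = 0) (m : ℤ) (R : M → M → Prop)
    (hS : ∀ a b, R a b → R b a)
    (hT : ∀ a b c, R a b → R b c → R a c)
    (e f u : M) (hef : ω e f = 1) (heu : ω e u = 0)
    (hR : ∀ w v c, ω e v = 0 → R w (w + (m * c * ω w v) • v)) : R (f + m • u) f := by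
  have hfe : ω f e = -1 := by rw [om_swap ω halt, hef]
  obtain ⟨y, hy⟩ : ∃ y, y = u - (ω u f) • e := ⟨_, rfl⟩
  have hey : ω e y = 0 := by simp [hy, heu, halt]
  have hye : ω y e = 0 := by rw [om_swap ω halt, hey, neg_zero]
  have hfy : ω f y = 0 := by
    simp only [hy, map_sub, map_smul, hfe, smul_eq_mul]
    rw [om_swap ω halt f u]; ring
  have k1 := short_move ω halt m R (fun v => ω e v = 0) hT hR f e y (-1) hey (halt e) hey
    (by simp [halt, hey])
  have k2 := hT _ _ _ k1 (hR _ e (- ω u f) (halt e))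
  apply hS
  convert k2 using 1
  simp only [map_add, map_smul, LinearMap.add_apply, LinearMap.smul_apply, hfe, hfy, hye, halt,
    smul_eq_mul]
  rw [hy]
  module

end abs

section sp
open Matrix
open scoped commutatorElement
variable {g : ℕ}

abbrev Sp (g : ℕ) := ↥(Matrix.symplecticGroup (Fin g) ℤ)
abbrev VV (g : ℕ) := Fin g ⊕ Fin g → ℤ

/-- symplectic form -/
noncomputable def om (g : ℕ) : VV g →ₗ[ℤ] VV g →ₗ[ℤ] ℤ :=
  LinearMap.mk₂ ℤ (fun x y => x ⬝ᵥ (J (Fin g) ℤ *ᵥ y))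
    (fun x y z => by simp [add_dotProduct]) (fun c x y => smul_dotProduct c x _)
    (fun x y z => by simp [mulVec_add, dotProduct_add])
    (fun c x y => by rw [mulVec_smul, dotProduct_smul])

lemma om_def (x y : VV g) : om g x y = x ⬝ᵥ (J (Fin g) ℤ *ᵥ y) := rfl

lemma J_mulVec_inl (y : VV g) (i : Fin g) : (J (Fin g) ℤ *ᵥ y) (Sum.inl i) = - y (Sum.inr i) := by
  simp [J, mulVec, dotProduct, Fintype.sum_sum_type, Matrix.one_apply]

lemma J_mulVec_inr (y : VV g) (i : Fin g) : (J (Fin g) ℤ *ᵥ y) (Sum.inr i) = y (Sum.inl i) := by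
  simp [J, mulVec, dotProduct, Fintype.sum_sum_type, Matrix.one_apply]

lemma om_eq (x y : VV g) : om g x y =
    ∑ i, (x (Sum.inr i) * y (Sum.inl i) - x (Sum.inl i) * y (Sum.inr i)) := by
  rw [om_def, dotProduct, Fintype.sum_sum_type, ← Finset.sum_add_distrib]
  refine Finset.sum_congr rfl fun i _ => ?_
  rw [J_mulVec_inl, J_mulVec_inr]; ring

lemma om_self (x : VV g) : om g x x = 0 := by
  rw [om_eq]; exact Finset.sum_eq_zero fun i _ => by ring

/-- basis vectors -/
def ee (i : Fin g) : VV g := Pi.single (Sum.inr i) 1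
def ff (i : Fin g) : VV g := Pi.single (Sum.inl i) 1

lemma om_ee (x : VV g) (i : Fin g) : om g x (ee i) = - x (Sum.inl i) := by
  rw [om_eq, Finset.sum_eq_single i] <;> simp +contextual [ee, Pi.single_apply, eq_comm]

lemma om_ff (x : VV g) (i : Fin g) : om g x (ff i) = x (Sum.inr i) := by
  rw [om_eq, Finset.sum_eq_single i] <;> simp +contextual [ff, Pi.single_apply, eq_comm]

lemma om_mul_gen (A : Matrix (Fin g ⊕ Fin g) (Fin g ⊕ Fin g) ℤ) (x y : VV g) :
    om g (A *ᵥ x) (A *ᵥ y) = x ⬝ᵥ ((Aᵀ * J (Fin g) ℤ * A) *ᵥ y) := by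
  rw [om_def, ← mulVec_mulVec, ← mulVec_mulVec, dotProduct_mulVec x Aᵀ, vecMul_transpose]

lemma om_act (A : Sp g) (x y : VV g) : om g (A.1 *ᵥ x) (A.1 *ᵥ y) = om g x y := by
  rw [om_mul_gen, SymplecticGroup.mem_iff'.mp A.2, om_def]

lemma mem_sp_of (A : Matrix (Fin g ⊕ Fin g) (Fin g ⊕ Fin g) ℤ)
    (h : ∀ x y, om g (A *ᵥ x) (A *ᵥ y) = om g x y) : A ∈ Matrix.symplecticGroup (Fin g) ℤ := by
  rw [SymplecticGroup.mem_iff']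
  ext i j
  have := h (Pi.single i 1) (Pi.single j 1)
  rw [om_mul_gen, om_def] at this
  simpa using this

/-- transvection matrix -/
def tmat (u : VV g) (c : ℤ) : Matrix (Fin g ⊕ Fin g) (Fin g ⊕ Fin g) ℤ :=
  1 + vecMulVec (c • u) (J (Fin g) ℤ *ᵥ u)

lemma tmat_act (u : VV g) (c : ℤ) (x : VV g) : tmat u c *ᵥ x = x + (c * om g x u) • u := by
  rw [tmat, add_mulVec, one_mulVec, vecMulVec_mulVec, om_def, dotProduct_comm x]
  ext i
  simp; ring

/-- transvection -/
def tv (u : VV g) (c : ℤ) : Sp g := ⟨tmat u c, mem_sp_of _ fun x y => by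
  simp only [tmat_act, map_add, map_smul, LinearMap.add_apply, LinearMap.smul_apply, om_self,
    smul_eq_mul]
  rw [om_swap (om g) om_self u y]; ring⟩

lemma tv_act (u : VV g) (c : ℤ) (x : VV g) : (tv u c).1 *ᵥ x = x + (c * om g x u) • u :=
  tmat_act u c x

lemma mul_act (A B : Sp g) (x : VV g) : (A * B).1 *ᵥ x = A.1 *ᵥ (B.1 *ᵥ x) := by
  rw [mulVec_mulVec]; rfl

lemma one_act (x : VV g) : (1 : Sp g).1 *ᵥ x = x := one_mulVec x

lemma inv_act (A : Sp g) (x : VV g) : A⁻¹.1 *ᵥ (A.1 *ᵥ x) = x := by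
  rw [← mul_act, inv_mul_cancel, one_act]

lemma ext_act (A B : Sp g) (h1 : ∀ i, A.1 *ᵥ ee i = B.1 *ᵥ ee i)
    (h2 : ∀ i, A.1 *ᵥ ff i = B.1 *ᵥ ff i) : A = B := by
  apply Subtype.ext
  ext i j
  rcases j with j | j
  · have := congrFun (h2 j) i
    simpa [ff] using this
  · have := congrFun (h1 j) i
    simpa [ee] using this

lemma tv_pow (u : VV g) (c : ℤ) (n : ℕ) : tv u c ^ n = tv u (n * c) := by
  have key : ∀ n : ℕ, ∀ x, (tv u c ^ n).1 *ᵥ x = (tv u (n * c)).1 *ᵥ x := by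
    intro n
    induction n with
    | zero => intro x; rw [pow_zero, tv_act, one_act]; simp
    | succ k ih =>
      intro x
      rw [pow_succ, mul_act, ih]
      simp only [tv_act, map_add, map_smul, LinearMap.add_apply, LinearMap.smul_apply, om_self,
        smul_eq_mul]
      push_cast
      module
  exact ext_act _ _ (fun i => key n _) (fun i => key n _)

/-- reduction mod m -/
noncomputable def red (g m : ℕ) : Sp g →* Matrix (Fin g ⊕ Fin g) (Fin g ⊕ Fin g) (ZMod m) :=
  ((Int.castRingHom (ZMod m)).mapMatrix.toMonoidHom).comp (Matrix.symplecticGroup (Fin g) ℤ).subtype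

lemma red_apply (m : ℕ) (A : Sp g) (i j) : red g m A i j = (A.1 i j : ZMod m) := rfl

/-- principal congruence subgroup -/
noncomputable def Gam (g m : ℕ) : Subgroup (Sp g) := (red g m).ker

instance (m : ℕ) : (Gam g m).Normal := MonoidHom.normal_ker _

lemma mem_Gam {m : ℕ} {A : Sp g} : A ∈ Gam g m ↔ ∃ X, A.1 = 1 + (m : ℤ) • X := by
  rw [Gam, MonoidHom.mem_ker]
  constructor
  · intro h
    have : ∀ i j, (m : ℤ) ∣ A.1 i j - (1 : Matrix _ _ ℤ) i j := by
      intro i j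
      have := congrFun (congrFun h i) j
      rw [red_apply] at this
      rw [← ZMod.intCast_zmod_eq_zero_iff_dvd]
      push_cast
      rw [this, Matrix.one_apply, Matrix.one_apply]
      split <;> simp
    choose X hX using this
    refine ⟨Matrix.of X, ?_⟩
    ext i j
    simp [← hX]
  · rintro ⟨X, hX⟩
    ext i j
    rw [red_apply, hX, Matrix.add_apply, Matrix.one_apply, Matrix.one_apply]
    split <;> simp

lemma gam_comm {a b : ℕ} {A B : Sp g} (hA : A ∈ Gam g a) (hB : B ∈ Gam g b) :
    ⁅A, B⁆ ∈ Gam g (a * b) := by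
  obtain ⟨X, hX⟩ := mem_Gam.mp hA
  obtain ⟨Y, hY⟩ := mem_Gam.mp hB
  have h : red g (a * b) (A * B) = red g (a * b) (B * A) := by
    have e : (A * B).1 = (B * A).1 + ((a * b : ℕ) : ℤ) • (X * Y - Y * X) := by
      change A.1 * B.1 = B.1 * A.1 + _
      rw [hX, hY]
      simp only [mul_add, add_mul, one_mul, mul_one, smul_mul_assoc, mul_smul_comm, smul_smul]
      push_cast
      module
    ext i j
    rw [red_apply, red_apply, e, Matrix.add_apply, Matrix.smul_apply, smul_eq_mul]
    push_cast
    have : ((a : ZMod (a * b)) * (b : ZMod (a * b))) = 0 := by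
      rw [← Nat.cast_mul]; exact ZMod.natCast_self _
    rw [this, zero_mul, add_zero]
  rw [Gam, MonoidHom.mem_ker, commutatorElement_def, show A * B * A⁻¹ * B⁻¹ = (A * B) * (B * A)⁻¹ by group,
    map_mul, h, ← map_mul, mul_inv_cancel, map_one]

lemma tv_mem_Gam (m : ℕ) (u : VV g) (c : ℤ) : tv u (m * c) ∈ Gam g m := by
  rw [mem_Gam]
  refine ⟨vecMulVec (c • u) (J (Fin g) ℤ *ᵥ u), ?_⟩
  change tmat _ _ = _
  rw [tmat, mul_smul, smul_vecMulVec]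

/-- pointwise stabilizer of the blocks in S -/
def Fx (S : Finset (Fin g)) : Subgroup (Sp g) where
  carrier := {A | ∀ i ∈ S, A.1 *ᵥ ee i = ee i ∧ A.1 *ᵥ ff i = ff i}
  mul_mem' {A B} hA hB i hi := by
    rw [mul_act, mul_act, (hB i hi).1, (hB i hi).2]; exact hA i hi
  one_mem' i _ := ⟨one_act _, one_act _⟩
  inv_mem' {A} hA i hi := by
    constructor
    · conv_lhs => rw [← (hA i hi).1]
      exact inv_act _ _
    · conv_lhs => rw [← (hA i hi).2]
      exact inv_act _ _

/-- complement lattice -/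
def Vs (S : Finset (Fin g)) : Submodule ℤ (VV g) where
  carrier := {x | ∀ i ∈ S, x (Sum.inl i) = 0 ∧ x (Sum.inr i) = 0}
  add_mem' {x y} hx hy i hi := by simp [hx i hi, hy i hi]
  zero_mem' i _ := by simp
  smul_mem' c x hx i hi := by simp [hx i hi]

lemma Fx_Vs {S : Finset (Fin g)} {A : Sp g} (hA : A ∈ Fx S) {x : VV g} (hx : x ∈ Vs S) :
    A.1 *ᵥ x ∈ Vs S := by
  intro i hi
  constructor
  · have := om_act A x (ee i)
    rw [(hA i hi).1, om_ee, om_ee, (hx i hi).1] at this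
    simpa using this
  · have := om_act A x (ff i)
    rw [(hA i hi).2, om_ff, om_ff, (hx i hi).2] at this
    simpa using this

lemma tv_Fx {S : Finset (Fin g)} {u : VV g} (hu : u ∈ Vs S) (c : ℤ) : tv u c ∈ Fx S := by
  intro i hi
  rw [tv_act, tv_act, om_swap (om g) om_self, om_ee, om_swap (om g) om_self (ff i), om_ff,
    (hu i hi).1, (hu i hi).2]
  simp

lemma ee_Vs {S : Finset (Fin g)} {j : Fin g} (hj : j ∉ S) : ee j ∈ Vs S := by
  intro i hi
  have : i ≠ j := fun h => hj (h ▸ hi)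
  simp [ee, Pi.single_apply, this]

lemma ff_Vs {S : Finset (Fin g)} {j : Fin g} (hj : j ∉ S) : ff j ∈ Vs S := by
  intro i hi
  have : i ≠ j := fun h => hj (h ▸ hi)
  simp [ff, Pi.single_apply, this]

lemma om_ee_ff (i : Fin g) : om g (ee i) (ff i) = 1 := by rw [om_ff]; simp [ee]
lemma om_ee_ff' {i j : Fin g} (h : i ≠ j) : om g (ee i) (ff j) = 0 := by
  rw [om_ff]; simp [ee, Pi.single_apply, h.symm]
lemma om_ee_ee (i j : Fin g) : om g (ee i) (ee j) = 0 := by rw [om_ee]; simp [ee]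
lemma om_ff_ff (i j : Fin g) : om g (ff i) (ff j) = 0 := by rw [om_ff]; simp [ff]
lemma om_ff_ee {i j : Fin g} (h : i ≠ j) : om g (ff i) (ee j) = 0 := by
  rw [om_ee]; simp [ff, Pi.single_apply, h.symm]

lemma gam_div {S : Finset (Fin g)} {m : ℕ} (hm : 2 ≤ m) {A : Sp g} (hA : A ∈ Gam g m)
    (hA' : A ∈ Fx S) {x : VV g} (hx : x ∈ Vs S) : ∃ u ∈ Vs S, A.1 *ᵥ x = x + (m : ℤ) • u := by
  obtain ⟨X, hX⟩ := mem_Gam.mp hA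
  have h : A.1 *ᵥ x = x + (m : ℤ) • (X *ᵥ x) := by
    rw [hX, add_mulVec, one_mulVec, smul_mulVec]
  refine ⟨X *ᵥ x, ?_, h⟩
  have h2 := Fx_Vs hA' hx
  rw [h] at h2
  have hm0 : (m : ℤ) ≠ 0 := by positivity
  intro i hi
  have h3 := h2 i hi
  have h4 := hx i hi
  simpa [h4, hm0, show m ≠ 0 by omega] using h3

lemma reduce_step {m : ℕ} (hm : 2 ≤ m) (N : Subgroup (Sp g)) (hN : ∀ u c, tv u (m * c) ∈ N)
    (hNm : N ≤ Gam g m) (S : Finset (Fin g)) (j l : Fin g) (hj : j ∉ S) (hl : l ∉ S) (hjl : j ≠ l)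
    (A : Sp g) (hA : A ∈ Gam g m) (hA' : A ∈ Fx S) :
    ∃ n ∈ N, n * A ∈ Fx (insert j S) := by
  -- first move `ee j`
  obtain ⟨n, hn, hnF, hne⟩ : ∃ n ∈ N, n ∈ Fx S ∧ (n * A).1 *ᵥ ee j = ee j := by
    let ω : Vs S →ₗ[ℤ] Vs S →ₗ[ℤ] ℤ := (om g).domRestrict₁₂ (Vs S) (Vs S)
    let R : Vs S → Vs S → Prop := fun a b => ∃ n ∈ N, n ∈ Fx S ∧ n.1 *ᵥ a.1 = b.1
    obtain ⟨u, hu, hAu⟩ := gam_div hm hA hA' (ee_Vs hj)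
    have := stepA ω (fun x => om_self x.1) (m : ℤ) (by exact_mod_cast hm) R
      (by
        rintro a b ⟨n, hn, hnF, h⟩
        exact ⟨n⁻¹, N.inv_mem hn, (Fx S).inv_mem hnF, by rw [← h, inv_act]⟩)
      (by
        rintro a b c ⟨n, hn, hnF, h⟩ ⟨n', hn', hnF', h'⟩
        exact ⟨n' * n, N.mul_mem hn' hn, (Fx S).mul_mem hnF' hnF, by rw [mul_act, h, h']⟩)
      (by
        intro w v c
        exact ⟨tv v.1 (m * c), hN _ _, tv_Fx v.2 _, by rw [tv_act]; rfl⟩)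
      (by
        rintro a b ⟨n, hn, hnF, h⟩ ⟨z, hz⟩
        refine ⟨⟨n.1 *ᵥ z.1, Fx_Vs hnF z.2⟩, ?_⟩
        change om g b.1 (n.1 *ᵥ z.1) = 1
        rw [← h, om_act]; exact hz)
      ⟨ee j, ee_Vs hj⟩ ⟨ff j, ff_Vs hj⟩ ⟨ee l, ee_Vs hl⟩ ⟨ff l, ff_Vs hl⟩ ⟨u, hu⟩
      (om_ee_ff j) (om_ee_ff l) (om_ee_ee _ _) (om_ee_ff' hjl) (om_ff_ee hjl) (om_ff_ff _ _)
      (by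
        refine ⟨⟨A.1 *ᵥ ff j, Fx_Vs hA' (ff_Vs hj)⟩, ?_⟩
        change om g (ee j + (m : ℤ) • u) (A.1 *ᵥ ff j) = 1
        rw [← hAu, om_act, om_ee_ff])
    obtain ⟨n, hn, hnF, h⟩ := this
    refine ⟨n, hn, hnF, ?_⟩
    rw [mul_act, hAu]
    exact h
  obtain ⟨n', hn', hnF', hne', hnf'⟩ : ∃ n' ∈ N, n' ∈ Fx S ∧ n'.1 *ᵥ ee j = ee j ∧
      n'.1 *ᵥ ((n * A).1 *ᵥ ff j) = ff j := by
    let ω : Vs S →ₗ[ℤ] Vs S →ₗ[ℤ] ℤ := (om g).domRestrict₁₂ (Vs S) (Vs S)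
    let R : Vs S → Vs S → Prop := fun a b => ∃ n ∈ N, n ∈ Fx S ∧ n.1 *ᵥ ee j = ee j ∧
      n.1 *ᵥ a.1 = b.1
    obtain ⟨u, hu, hAu⟩ := gam_div hm ((Gam g m).mul_mem (hNm hn) hA) ((Fx S).mul_mem hnF hA')
      (ff_Vs hj)
    have := stepF ω (fun x => om_self x.1) (m : ℤ) R
      (by
        rintro a b ⟨n, hn, hnF, hne, h⟩
        refine ⟨n⁻¹, N.inv_mem hn, (Fx S).inv_mem hnF, ?_, by rw [← h, inv_act]⟩
        conv_lhs => rw [← hne]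
        exact inv_act _ _)
      (by
        rintro a b c ⟨n, hn, hnF, hne, h⟩ ⟨n', hn', hnF', hne', h'⟩
        exact ⟨n' * n, N.mul_mem hn' hn, (Fx S).mul_mem hnF' hnF, by rw [mul_act, hne, hne'],
          by rw [mul_act, h, h']⟩)
      ⟨ee j, ee_Vs hj⟩ ⟨ff j, ff_Vs hj⟩ ⟨u, hu⟩ (om_ee_ff j)
      (by
        change om g (ee j) u = 0
        have h := om_act (n * A) (ee j) (ff j)
        rw [hne, hAu, map_add, map_smul, om_ee_ff, smul_eq_mul] at h
        have hm0 : (m : ℤ) ≠ 0 := by positivity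
        have h' : (m : ℤ) * om g (ee j) u = 0 := by linarith
        exact (mul_eq_zero.mp h').resolve_left hm0)
      (by
        intro w v c hv
        refine ⟨tv v.1 (m * c), hN _ _, tv_Fx v.2 _, ?_, by rw [tv_act]; rfl⟩
        rw [tv_act, show om g (ee j) v.1 = 0 from hv]
        simp)
    obtain ⟨n', h1, h2, h3, h4⟩ := this
    refine ⟨n', h1, h2, h3, ?_⟩
    rw [hAu]
    exact h4
  refine ⟨n' * n, N.mul_mem hn' hn, ?_⟩
  intro i hi
  rw [mul_assoc, mul_act, mul_act n']
  rcases Finset.mem_insert.mp hi with rfl | hi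
  · rw [hne, hne', hnf']
    exact ⟨rfl, rfl⟩
  · have h := (Fx S).mul_mem hnF hA' i hi
    rw [h.1, h.2]
    exact hnF' i hi

lemma reduce_all {m : ℕ} (hm : 2 ≤ m) (N : Subgroup (Sp g)) (hN : ∀ u c, tv u (m * c) ∈ N)
    (hNm : N ≤ Gam g m) (l : Fin g) (A : Sp g) (hA : A ∈ Gam g m) (S : Finset (Fin g)) (hS : l ∉ S) :
    ∃ n ∈ N, n * A ∈ Fx S := by
  induction S using Finset.induction_on with
  | empty => exact ⟨1, N.one_mem, fun i hi => absurd hi (Finset.notMem_empty i)⟩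
  | insert j S hj ih =>
    rw [Finset.mem_insert, not_or] at hS
    obtain ⟨n, hn, h⟩ := ih hS.2
    obtain ⟨n', hn', h'⟩ := reduce_step hm N hN hNm S j l hj hS.2 (fun h => hS.1 h.symm) (n * A)
      ((Gam g m).mul_mem (hNm hn) hA) h
    exact ⟨n' * n, N.mul_mem hn' hn, by rwa [mul_assoc]⟩

lemma fx_supp {A B : Sp g} {i j : Fin g} (hij : i ≠ j) (hA : A ∈ Fx (Finset.univ.erase i))
    (hB : B ∈ Fx (Finset.univ.erase j)) {x : VV g} (hx : x ∈ Vs (Finset.univ.erase i)) :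
    B.1 *ᵥ x = x := by
  have hx' : x = x (Sum.inr i) • ee i + x (Sum.inl i) • ff i := by
    ext k
    rcases k with k | k
    · by_cases h : k = i
      · subst h; simp [ee, ff]
      · have := (hx k (by simp [h])).1
        simp [ee, ff, this, Pi.single_apply, h]
    · by_cases h : k = i
      · subst h; simp [ee, ff]
      · have := (hx k (by simp [h])).2
        simp [ee, ff, this, Pi.single_apply, h]
  have hBi := hB i (by simp [hij])
  rw [hx', mulVec_add, mulVec_smul, mulVec_smul, hBi.1, hBi.2]

lemma fx_comm {A B : Sp g} {i j : Fin g} (hij : i ≠ j) (hA : A ∈ Fx (Finset.univ.erase i))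
    (hB : B ∈ Fx (Finset.univ.erase j)) : A * B = B * A := by
  have key : ∀ k, ∀ x, x ∈ Vs (Finset.univ.erase k) → A.1 *ᵥ (B.1 *ᵥ x) = B.1 *ᵥ (A.1 *ᵥ x) := by
    intro k x hx
    by_cases hki : k = i
    · subst hki
      rw [fx_supp hij hA hB hx, fx_supp hij hA hB (Fx_Vs hA hx)]
    · have hxA : A.1 *ᵥ x = x := fx_supp (i := k) (j := i) (A := 1) hki (one_mem _) hA hx
      by_cases hkj : k = j
      · subst hkj
        rw [hxA, fx_supp hij.symm hB hA (Fx_Vs hB hx)]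
      · have hxB : B.1 *ᵥ x = x := fx_supp (i := k) (j := j) (A := 1) hkj (one_mem _) hB hx
        rw [hxA, hxB, hxA]
  refine ext_act _ _ (fun k => ?_) (fun k => ?_)
  · rw [mul_act, mul_act]; exact key k _ (ee_Vs (by simp))
  · rw [mul_act, mul_act]; exact key k _ (ff_Vs (by simp))

lemma gam_abelian {m : ℕ} (hm : 2 ≤ m) (N : Subgroup (Sp g)) [N.Normal]
    (hN : ∀ A : Sp g, A ^ m ∈ N) (hg : 2 ≤ g) {A B : Sp g} (hA : A ∈ Gam g m) (hB : B ∈ Gam g m) :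
    ⁅A, B⁆ ∈ N := by
  have hN' : ∀ u c, tv u (m * c) ∈ (N ⊓ Gam g m : Subgroup (Sp g)) := fun u c =>
    ⟨by rw [← tv_pow]; exact hN _, tv_mem_Gam m u c⟩
  let i : Fin g := ⟨0, by omega⟩
  let j : Fin g := ⟨1, by omega⟩
  have hij : i ≠ j := by simp [i, j]
  obtain ⟨a, ha, haA⟩ := reduce_all hm _ hN' inf_le_right i A hA (Finset.univ.erase i) (by simp)
  obtain ⟨b, hb, hbB⟩ := reduce_all hm _ hN' inf_le_right j B hB (Finset.univ.erase j) (by simp)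
  have h := fx_comm hij haA hbB
  rw [← QuotientGroup.eq_one_iff]
  have ha' : (a : Sp g ⧸ N) = 1 := (QuotientGroup.eq_one_iff a).mpr ha.1
  have hb' : (b : Sp g ⧸ N) = 1 := (QuotientGroup.eq_one_iff b).mpr hb.1
  have h' := congrArg (QuotientGroup.mk' N) h
  simp only [map_mul, QuotientGroup.mk'_apply, ha', hb', one_mul] at h'
  rw [commutatorElement_def]
  change (A : Sp g ⧸ N) * B * (A : Sp g ⧸ N)⁻¹ * (B : Sp g ⧸ N)⁻¹ = 1
  rw [h']; group

end sp
section linrep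
open Matrix Polynomial
open scoped commutatorElement

lemma center_inf {S : Type*} [Group S] [Finite S] {q : ℕ} [Fact q.Prime] (hS : IsPGroup q S)
    (hc : ¬ ∀ a b : S, a * b = b * a) :
    ∃ z : S, z ∈ commutator S ∧ z ≠ 1 ∧ ∀ s : S, s * z = z * s := by
  have hnil := hS.isNilpotent
  by_contra! hcon
  have key : ∀ n, Subgroup.lowerCentralSeries (⊤ : Subgroup S) (n+2) = ⊥ → Subgroup.lowerCentralSeries (⊤ : Subgroup S) (n+1) = ⊥ := by
    intro n hn
    rw [eq_bot_iff]
    intro z hz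
    by_contra hz1
    have hz2 : z ∈ commutator S := by
      have : Subgroup.lowerCentralSeries (⊤ : Subgroup S) (n+1) ≤ Subgroup.lowerCentralSeries (⊤ : Subgroup S) 1 := Subgroup.lowerCentralSeries_antitone _ (by omega)
      have := this hz
      rwa [Subgroup.top_lowerCentralSeries_one] at this
    obtain ⟨s, hs⟩ := hcon z hz2 hz1
    apply hs
    have : ⁅z, s⁆ ∈ Subgroup.lowerCentralSeries (⊤ : Subgroup S) (n+2) := Subgroup.commutator_mem_commutator hz (Subgroup.mem_top s)
    rw [hn, Subgroup.mem_bot, commutatorElement_eq_one_iff_mul_comm] at this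
    exact this.symm
  obtain ⟨n, hn⟩ := Subgroup.nilpotent_iff_lowerCentralSeries.mp hnil
  have h1 : Subgroup.lowerCentralSeries (⊤ : Subgroup S) 1 = ⊥ := by
    have : ∀ n, Subgroup.lowerCentralSeries (⊤ : Subgroup S) (n+1) = ⊥ → Subgroup.lowerCentralSeries (⊤ : Subgroup S) 1 = ⊥ := by
      intro n
      induction n with
      | zero => exact id
      | succ k ih => exact fun h => ih (key k h)
    refine this n ?_
    rw [eq_bot_iff, ← hn]
    exact Subgroup.lowerCentralSeries_antitone _ (by omega)
  apply hc
  intro a b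
  have : ⁅a, b⁆ ∈ Subgroup.lowerCentralSeries (⊤ : Subgroup S) 1 := Subgroup.commutator_mem_commutator (Subgroup.mem_top a) (Subgroup.mem_top b)
  rw [h1, Subgroup.mem_bot, commutatorElement_eq_one_iff_mul_comm] at this
  exact this

lemma pgroup_comm {S : Type*} [Group S] [Finite S] {q : ℕ} [Fact q.Prime] (hS : IsPGroup q S)
    {E F : Type*} [Field F] [IsAlgClosed F] [AddCommGroup E] [Module F E] [FiniteDimensional F E]
    (hq : (q : F) ≠ 0) (hd : Module.finrank F E < q)
    (ρ : S →* Module.End F E) (hρ : Function.Injective ρ) (a b : S) : a * b = b * a := by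
  revert a b
  by_contra hc
  obtain ⟨z, hz, hz1, hzc⟩ := center_inf hS hc
  obtain ⟨k, hk⟩ := hS z
  have hz1' : ρ z ≠ 1 := fun h => hz1 (hρ (h.trans ρ.map_one.symm))
  have hnt : Nontrivial E := by
    by_contra h
    rw [not_nontrivial_iff_subsingleton] at h
    exact hz1' (LinearMap.ext fun x => Subsingleton.elim _ _)
  obtain ⟨ζ, hζ, hζ1, hζN⟩ : ∃ ζ : F, (ρ z).HasEigenvalue ζ ∧ ζ ≠ 1 ∧ ζ ^ (q ^ k) = 1 := by
    let Φ : F[X] := ∑ i ∈ Finset.range (q ^ k), X ^ i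
    have hfac : aeval (ρ z) Φ * (ρ z - 1) = 0 := by
      have : Φ * (X - 1) = X ^ (q ^ k) - 1 := geom_sum_mul _ _
      have := congrArg (aeval (ρ z)) this
      simp only [map_mul, map_sub, aeval_X, map_one, map_pow] at this
      rw [this, ← map_pow, hk, map_one, sub_self]
    have hnu : ¬ IsUnit (aeval (ρ z) Φ) := fun hu => by
      have := (hu.mul_right_eq_zero).mp hfac
      exact hz1' (sub_eq_zero.mp this)
    have h0 : (0 : F) ∈ spectrum F (aeval (ρ z) Φ) := by
      rw [spectrum.zero_mem_iff]; exact hnu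
    have hne : (spectrum F (ρ z)).Nonempty := spectrum.nonempty_of_isAlgClosed_of_finiteDimensional F _
    rw [spectrum.map_polynomial_aeval_of_nonempty _ _ hne] at h0
    obtain ⟨ζ, hζ, hζ0⟩ := h0
    refine ⟨ζ, Module.End.hasEigenvalue_iff_mem_spectrum.mpr hζ, ?_, ?_⟩
    · rintro rfl
      simp [Φ, eval_finsetSum] at hζ0
      exact hq hζ0.1
    · have : Φ * (X - 1) = X ^ (q ^ k) - 1 := geom_sum_mul _ _
      have := congrArg (eval ζ) this
      simp only [eval_mul, eval_sub, eval_X, eval_one, eval_pow] at this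
      simp only at hζ0
      rw [hζ0, zero_mul] at this
      exact (sub_eq_zero.mp this.symm)
  let W := (ρ z).eigenspace ζ
  have hW : ∀ s : S, ∀ x ∈ W, ρ s x ∈ W := by
    intro s x hx
    rw [Module.End.mem_eigenspace_iff] at hx ⊢
    have : ρ z (ρ s x) = ρ s (ρ z x) := by
      rw [← Module.End.mul_apply, ← Module.End.mul_apply, ← map_mul, ← map_mul, hzc]
    rw [this, hx, map_smul]
  let χ : S →* F :=
    { toFun := fun s => LinearMap.det ((ρ s).restrict (hW s))
      map_one' := by
        rw [show (ρ 1).restrict (hW 1) = LinearMap.id from ?_, LinearMap.det_id]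
        ext x; simp
      map_mul' := fun s t => by
        rw [← LinearMap.det_comp]
        congr 1
        ext x; simp }
  have hχ : χ z = ζ ^ Module.finrank F W := by
    have : (ρ z).restrict (hW z) = ζ • LinearMap.id := by
      ext x
      simpa using Module.End.mem_eigenspace_iff.mp x.2
    change LinearMap.det ((ρ z).restrict (hW z)) = _
    rw [this, LinearMap.det_smul, LinearMap.det_id, mul_one]
  have hχ1 : χ z = 1 := by
    have := Abelianization.commutator_subset_ker χ.toHomUnits hz
    rw [MonoidHom.mem_ker] at this
    simpa using congrArg Units.val this
  have hW0 : 0 < Module.finrank F W := by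
    have : Nontrivial W := Submodule.nontrivial_iff_ne_bot.mpr hζ
    exact Module.finrank_pos
  have hWq : Module.finrank F W < q := lt_of_le_of_lt (Submodule.finrank_le W) hd
  have hcop : Nat.Coprime (q ^ k) (Module.finrank F W) :=
    Nat.Coprime.pow_left _ ((Nat.Prime.coprime_iff_not_dvd Fact.out).mpr
      (Nat.not_dvd_of_pos_of_lt hW0 hWq))
  apply hζ1
  have h1 := orderOf_dvd_of_pow_eq_one hζN
  have h2 := orderOf_dvd_of_pow_eq_one (hχ.symm.trans hχ1)
  have h3 := Nat.dvd_gcd h1 h2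
  rw [hcop.gcd_eq_one, Nat.dvd_one, orderOf_eq_one_iff] at h3
  exact h3

lemma section_lemma {Γ X L : Type*} [Group Γ] [Group X] [Group L] [Finite L] [Finite X] {q : ℕ} [Fact q.Prime]
    (hX : IsPGroup q X)
    {E F : Type*} [Field F] [IsAlgClosed F] [AddCommGroup E] [Module F E] [FiniteDimensional F E]
    (hq : (q : F) ≠ 0) (hd : Module.finrank F E < q)
    (σ : L →* Module.End F E) (hσ : Function.Injective σ)
    (ρ : Γ →* L) (ψ : Γ →* X) (hψ : Function.Surjective ψ)
    (hker : ρ.ker ≤ ψ.ker) (a b : X) : a * b = b * a := by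
  let ψ' : ρ.range →* X := ρ.rangeRestrict.liftOfSurjective ρ.rangeRestrict_surjective
    ⟨ψ, by rwa [MonoidHom.ker_rangeRestrict]⟩
  have hψ' : ∀ x, ψ' (ρ.rangeRestrict x) = ψ x := fun x =>
    MonoidHom.liftOfRightInverse_comp_apply _ _ _ _ x
  have hsurj : Function.Surjective ψ' := fun x => by
    obtain ⟨y, rfl⟩ := hψ x
    exact ⟨_, hψ' y⟩
  let P : Sylow q ρ.range := default
  let P' : Sylow q X := P.mapSurjective hsurj
  have hP' : (P' : Subgroup X) = ⊤ := by
    exact (P'.is_maximal' (Q := ⊤) (hX.to_subgroup _) le_top).symm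
  have hP'' : (P : Subgroup ρ.range).map ψ' = ⊤ := hP'
  have ha : a ∈ (P : Subgroup ρ.range).map ψ' := by rw [hP'']; trivial
  have hb : b ∈ (P : Subgroup ρ.range).map ψ' := by rw [hP'']; trivial
  obtain ⟨x, hx, rfl⟩ := ha
  obtain ⟨y, hy, rfl⟩ := hb
  have := pgroup_comm (S := P) P.isPGroup' hq hd
    ((σ.comp ρ.range.subtype).comp (P : Subgroup ρ.range).subtype)
    ((hσ.comp Subtype.val_injective).comp Subtype.val_injective) ⟨x, hx⟩ ⟨y, hy⟩
  rw [← map_mul, ← map_mul]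
  exact congrArg ψ' (congrArg Subtype.val this)

/-- Heisenberg group mod q -/
@[ext] structure Heis (q : ℕ) : Type where
  a : ZMod q
  b : ZMod q
  c : ZMod q

instance (q : ℕ) : Mul (Heis q) := ⟨fun x y => ⟨x.a + y.a, x.b + y.b, x.c + y.c + x.a * y.b⟩⟩
instance (q : ℕ) : One (Heis q) := ⟨⟨0, 0, 0⟩⟩
instance (q : ℕ) : Inv (Heis q) := ⟨fun x => ⟨-x.a, -x.b, -x.c + x.a * x.b⟩⟩
instance (q : ℕ) : Group (Heis q) :=
  Group.ofLeftAxioms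
    (fun x y z => by
      change Heis.mk _ _ _ = Heis.mk _ _ _
      ext
      · exact add_assoc _ _ _
      · exact add_assoc _ _ _
      · change (x.c + y.c + x.a * y.b) + z.c + (x.a + y.a) * z.b
          = x.c + (y.c + z.c + y.a * z.b) + x.a * (y.b + z.b)
        ring)
    (fun x => by
      change Heis.mk (0 + x.a) (0 + x.b) (0 + x.c + 0 * x.b) = x
      ext <;> simp)
    (fun x => by
      change Heis.mk (-x.a + x.a) (-x.b + x.b) (-x.c + x.a * x.b + x.c + -x.a * x.b) = ⟨0, 0, 0⟩
      ext <;> simp)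

def heisEquiv (q : ℕ) : Heis q ≃ ZMod q × ZMod q × ZMod q where
  toFun x := (x.a, x.b, x.c)
  invFun x := ⟨x.1, x.2.1, x.2.2⟩
  left_inv _ := rfl
  right_inv _ := rfl

lemma heis_card (q : ℕ) : Nat.card (Heis q) = q ^ 3 := by
  rw [Nat.card_congr (heisEquiv q)]
  simp [Nat.card_prod]; ring

instance (q : ℕ) [NeZero q] : Finite (Heis q) := Finite.of_equiv _ (heisEquiv q).symm

lemma heis_pgroup (q : ℕ) [Fact q.Prime] : IsPGroup q (Heis q) := IsPGroup.of_card (heis_card q)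

lemma heis_noncomm (q : ℕ) [Fact q.Prime] : ¬ ∀ x y : Heis q, x * y = y * x := by
  intro h
  have h1 := congrArg Heis.c (h ⟨1, 0, 0⟩ ⟨0, 1, 0⟩)
  change (0 : ZMod q) + 0 + 1 * 1 = 0 + 0 + 0 * 0 at h1
  simp at h1

end linrep

section final
open scoped commutatorElement
variable {g : ℕ} {H : Type} [Group H]

lemma simple_dich [IsSimpleGroup H] (K : Subgroup (Sp g)) (f : K →* H)
    (hf : Function.Surjective f) (N : Subgroup (Sp g)) [hN : N.Normal] :
    (∀ k : K, k.1 ∈ N → f k = 1) ∨ (∀ h : H, ∃ k : K, k.1 ∈ N ∧ f k = h) := by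
  have h1 : ((N.subgroupOf K).map f).Normal := Subgroup.Normal.map inferInstance f hf
  rcases IsSimpleGroup.eq_bot_or_eq_top_of_normal _ h1 with h | h
  · left
    intro k hk
    have : f k ∈ (N.subgroupOf K).map f := ⟨k, hk, rfl⟩
    rwa [h, Subgroup.mem_bot] at this
  · right
    intro x
    have : x ∈ (N.subgroupOf K).map f := by rw [h]; trivial
    obtain ⟨k, hk, rfl⟩ := this
    exact ⟨k, hk, rfl⟩

lemma exists_prime [IsSimpleGroup H] (hnc : ¬ ∀ a b : H, a * b = b * a)
    (K : Subgroup (Sp g)) (f : K →* H) (hf : Function.Surjective f) (m : ℕ) (hm : m ≠ 0)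
    (h : ∀ k : K, k.1 ∈ Gam g m → f k = 1) :
    ∃ p : ℕ, p.Prime ∧ ∀ k : K, k.1 ∈ Gam g p → f k = 1 := by
  induction m using Nat.recOnMul with
  | zero => exact absurd rfl hm
  | one =>
    exfalso
    apply hnc
    intro a b
    have : ∀ a : H, a = 1 := by
      intro a
      obtain ⟨k, rfl⟩ := hf a
      exact h k (mem_Gam.mpr ⟨k.1.1 - 1, by simp⟩)
    rw [this a, this b]
  | prime p hp => exact ⟨p, hp, h⟩
  | mul a b iha ihb =>
    rcases simple_dich K f hf (Gam g a) with ha | ha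
    · exact iha (left_ne_zero_of_mul hm) ha
    rcases simple_dich K f hf (Gam g b) with hb | hb
    · exact ihb (right_ne_zero_of_mul hm) hb
    exfalso
    apply hnc
    intro x y
    obtain ⟨k, hk, rfl⟩ := ha x
    obtain ⟨l, hl, rfl⟩ := hb y
    have := h ⁅k, l⁆ (gam_comm hk hl)
    rwa [map_commutatorElement, commutatorElement_eq_one_iff_mul_comm] at this

lemma exists_prime' [IsSimpleGroup H] [Finite H] (hg : 2 ≤ g) (hnc : ¬ ∀ a b : H, a * b = b * a)
    (K : Subgroup (Sp g)) (hK : K.FiniteIndex) (f : K →* H) (hf : Function.Surjective f) :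
    ∃ p : ℕ, p.Prime ∧ ∀ k : K, k.1 ∈ Gam g p → f k = 1 := by
  have hker : f.ker.FiniteIndex := inferInstance
  let N0 : Subgroup (Sp g) := f.ker.map K.subtype
  have hN0 : N0.index ≠ 0 := by
    rw [Subgroup.index_map_subtype]
    exact mul_ne_zero hker.index_ne_zero hK.index_ne_zero
  have hN0' : N0.FiniteIndex := ⟨hN0⟩
  let N := N0.normalCore
  have hNf : N.FiniteIndex := inferInstance
  let m := N.index * 2
  have hm : 2 ≤ m := by
    have := Nat.pos_of_ne_zero hNf.index_ne_zero
    simp only [m]; omega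
  have hNm : ∀ A : Sp g, A ^ m ∈ N := fun A => by
    rw [pow_mul]; exact N.pow_mem (N.pow_index_mem A) 2
  have hNK : ∀ k : K, k.1 ∈ N → f k = 1 := by
    intro k hk
    obtain ⟨k', hk', h⟩ := N0.normalCore_le hk
    have : k' = k := Subtype.ext h
    rw [← this]; exact hk'
  refine exists_prime hnc K f hf m (by omega) ?_
  rcases simple_dich K f hf (Gam g m) with h | h
  · exact h
  · exfalso
    apply hnc
    intro x y
    obtain ⟨k, hk, rfl⟩ := h x
    obtain ⟨l, hl, rfl⟩ := h y
    have := hNK ⁅k, l⁆ (gam_abelian hm N hNm hg hk hl)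
    rwa [map_commutatorElement, commutatorElement_eq_one_iff_mul_comm] at this

lemma final_aux (K : Subgroup (Sp g)) (f : K →* H) (hf : Function.Surjective f)
    {p q : ℕ} [Fact p.Prime] [Fact q.Prime] (hpq : p ≠ q) (hq : 2 * g < q)
    (h : ∀ k : K, k.1 ∈ Gam g p → f k = 1)
    {X : Type} [Group X] [Finite X] (hX : IsPGroup q X) (τ : X →* H)
    (hτ : Function.Injective τ) (a b : X) : a * b = b * a := by
  let F := AlgebraicClosure (ZMod p)
  let Y := τ.range
  let e : X ≃* Y := MonoidHom.ofInjective hτ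
  have : Finite Y := Finite.of_equiv _ e.toEquiv
  have hY : IsPGroup q Y := hX.of_equiv e
  let ψ : Y.comap f →* Y := f.subgroupComap Y
  have hψ : Function.Surjective ψ := f.subgroupComap_surjective_of_surjective Y hf
  let ρ : Y.comap f →* (Matrix (Fin g ⊕ Fin g) (Fin g ⊕ Fin g) (ZMod p))ˣ :=
    (((red g p).comp K.subtype).comp (Y.comap f).subtype).toHomUnits
  let i : Matrix (Fin g ⊕ Fin g) (Fin g ⊕ Fin g) (ZMod p) →+*
      Matrix (Fin g ⊕ Fin g) (Fin g ⊕ Fin g) F := (algebraMap (ZMod p) F).mapMatrix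
  have hi : Function.Injective i := Matrix.map_injective (algebraMap (ZMod p) F).injective
  let σ : (Matrix (Fin g ⊕ Fin g) (Fin g ⊕ Fin g) (ZMod p))ˣ →*
      Module.End F (Fin g ⊕ Fin g → F) :=
    ((Matrix.toLinAlgEquiv' (R := F) (n := Fin g ⊕ Fin g)).toAlgHom.toRingHom.toMonoidHom.comp
      i.toMonoidHom).comp (Units.coeHom _)
  have hσ : Function.Injective σ :=
    ((Matrix.toLinAlgEquiv' (R := F) (n := Fin g ⊕ Fin g)).injective.comp hi).comp Units.val_injective
  have hqF : (q : F) ≠ 0 := by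
    intro h0
    have : CharP F p := inferInstance
    rw [CharP.cast_eq_zero_iff F p] at h0
    exact hpq ((Nat.prime_dvd_prime_iff_eq Fact.out Fact.out).mp h0)
  have key := section_lemma hY hqF (by simpa [two_mul] using hq) σ hσ ρ ψ hψ ?_ (e a) (e b)
  · rw [← map_mul, ← map_mul] at key
    exact e.injective key
  · intro k hk
    rw [MonoidHom.mem_ker] at hk ⊢
    apply Subtype.ext
    apply h k.1
    rw [Gam, MonoidHom.mem_ker]
    exact congrArg Units.val hk

lemma sign_odd {α X : Type} [Fintype α] [DecidableEq α] [Group X] (hX : Odd (Nat.card X))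
    (τ : X →* Equiv.Perm α) (x : X) : τ x ∈ alternatingGroup α := by
  rw [Equiv.Perm.mem_alternatingGroup]
  have h1 : (Equiv.Perm.sign (τ x)) ^ (Nat.card X) = 1 := by
    rw [← map_pow, ← map_pow, pow_card_eq_one', map_one, map_one]
  rcases Int.units_eq_one_or (Equiv.Perm.sign (τ x)) with h | h
  · exact h
  · rw [h, hX.neg_one_pow] at h1
    exact absurd h1 (by decide)

end final

end SpInv

/-- For every `g ≥ 2`, not every finite group is involved in the integral symplectic
group `Sp(2g, ℤ)` (the group of `2g × 2g` integer matrices preserving the standard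
symplectic form): there is a finite group `H` such that no finite-index subgroup of
`Sp(2g, ℤ)` admits a surjective homomorphism onto `H`. -/
theorem not_all_finite_groups_involved_in_Sp (g : ℕ) (hg : 2 ≤ g) :
    ∃ H : BundledFiniteGroup,
      ∀ K : Subgroup ↥(Matrix.symplecticGroup (Fin g) ℤ), K.FiniteIndex →
        ∀ f : K →* H.carrier, ¬ Function.Surjective f := by
  classical
  obtain ⟨q, hq1, hq⟩ := Nat.exists_infinite_primes (2 * g + 1)
  obtain ⟨r, hr1, hr⟩ := Nat.exists_infinite_primes (q + 1)
  haveI : Fact q.Prime := ⟨hq⟩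
  haveI : Fact r.Prime := ⟨hr⟩
  let α := SpInv.Heis q × SpInv.Heis r
  haveI : Fintype α := Fintype.ofFinite α
  have hcard : 5 ≤ Nat.card α := by
    rw [Nat.card_prod, SpInv.heis_card, SpInv.heis_card]
    have h1 : 1 ≤ r ^ 3 := Nat.one_le_pow _ _ hr.pos
    have h2 : q ^ 1 ≤ q ^ 3 := Nat.pow_le_pow_right hq.pos (by norm_num)
    nlinarith
  haveI : IsSimpleGroup (alternatingGroup α) := alternatingGroup.isSimpleGroup hcard
  let t : α →* Equiv.Perm α := MulAction.toPermHom α α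
  have ht : Function.Injective t := MulAction.toPerm_injective
  let tq : SpInv.Heis q →* alternatingGroup α :=
    (t.comp (MonoidHom.inl _ _)).codRestrict _ (SpInv.sign_odd (by
      rw [SpInv.heis_card]; exact (hq.odd_of_ne_two (by omega)).pow) _)
  let tr : SpInv.Heis r →* alternatingGroup α :=
    (t.comp (MonoidHom.inr _ _)).codRestrict _ (SpInv.sign_odd (by
      rw [SpInv.heis_card]; exact (hr.odd_of_ne_two (by omega)).pow) _)
  have htq : Function.Injective tq := by
    intro x y h
    have := ht (congrArg Subtype.val h)
    exact congrArg Prod.fst this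
  have htr : Function.Injective tr := by
    intro x y h
    have := ht (congrArg Subtype.val h)
    exact congrArg Prod.snd this
  have hnc : ¬ ∀ a b : alternatingGroup α, a * b = b * a := by
    intro h
    apply SpInv.heis_noncomm q
    intro x y
    apply htq
    rw [map_mul, map_mul, h]
  refine ⟨⟨alternatingGroup α⟩, ?_⟩
  intro K hK f hf
  obtain ⟨p, hp, hpk⟩ := SpInv.exists_prime' (H := alternatingGroup α) hg hnc K hK f hf
  haveI : Fact p.Prime := ⟨hp⟩
  by_cases hpq : p = q
  · exact SpInv.heis_noncomm r (SpInv.final_aux K f hf (p := p) (q := r) (by omega) (by omega) hpk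
      (SpInv.heis_pgroup r) tr htr)
  · exact SpInv.heis_noncomm q (SpInv.final_aux K f hf (p := p) (q := q) hpq (by omega) hpk
      (SpInv.heis_pgroup q) tq htq)
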